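/- There exists a constant C > 0 such that for all w ∈ V and v ∈ V, |(B(w,v), w)_H| ≤ C ‖v‖_{ℓ⁴} |w|^{1/2} ‖w‖^{3/2}, where |·| is the H-norm, ‖·‖ is the V-norm and ‖·‖_{ℓ⁴} the ℓ⁴-norm. -/

import Mathlib

/-!
Every component satisfies `‖v m‖ ≤ ‖v‖_{ℓ⁴}`, so
`‖B_n(w,v)‖ ‖w_n‖ ≤ ‖v‖_{ℓ⁴} (k_n ‖w_n‖) g_n`, where `g_n` (`nbr w n` below) is a fixed
combination of the neighbours `‖w_{n+1}‖, ‖w_{n+2}‖, ‖w_{n-1}‖`. Shifts are bounded on `ℓ²`, so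
`∑ g_n² ≤ 4 |w|²`, and Cauchy–Schwarz gives `|(B(w,v),w)| ≤ 2 ‖v‖_{ℓ⁴} ‖w‖ |w|`.
Finally `k₀ |w| ≤ ‖w‖` trades a factor `|w|^{1/2}` for `k₀^{-1/2} ‖w‖^{1/2}`.
-/

/-- The wave numbers `k n = k₀ * 2 ^ n`. -/
noncomputable def kk (k₀ : ℝ) (n : ℕ) : ℝ := k₀ * 2 ^ n

/-- The GOY bilinear operator, componentwise.  The index `n = 0` is not used (sequences are
indexed from `1`) and the boundary conventions `u₀ = u₋₁ = v₀ = v₋₁ = 0` are realized by the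
hypotheses `u 0 = 0`, `v 0 = 0` together with truncated subtraction on `ℕ`. -/
noncomputable def goyB (k₀ : ℝ) (u v : ℕ → ℂ) (n : ℕ) : ℂ :=
  if n = 0 then 0 else
    Complex.I * (kk k₀ n : ℂ) *
      ((1 / 4 : ℂ) * (starRingEnd ℂ) (u (n + 1)) * (starRingEnd ℂ) (v (n - 1))
        - (1 / 2 : ℂ) * ((starRingEnd ℂ) (u (n + 1)) * (starRingEnd ℂ) (v (n + 2))
            + (starRingEnd ℂ) (u (n + 2)) * (starRingEnd ℂ) (v (n + 1)))
        + (1 / 8 : ℂ) * (starRingEnd ℂ) (u (n - 1)) * (starRingEnd ℂ) (v (n - 2)))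

/-- The combination of neighbouring moduli of `w` multiplying `k_n ‖v‖_{ℓ⁴}` in the pointwise bound
for `B_n(w,v)`; at `n = 0` the truncated index `n - 1` gives `w 0`, which vanishes in use. -/
noncomputable def nbr (w : ℕ → ℂ) (n : ℕ) : ℝ :=
  3 / 4 * ‖w (n + 1)‖ + 1 / 2 * ‖w (n + 2)‖ + 1 / 8 * ‖w (n - 1)‖

lemma nbr_nonneg (w : ℕ → ℂ) (n : ℕ) : 0 ≤ nbr w n := by
  unfold nbr; positivity

lemma kk_pos {k₀ : ℝ} (hk₀ : 0 < k₀) (n : ℕ) : 0 < kk k₀ n := by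
  unfold kk; positivity

lemma norm_goyB_le {k₀ : ℝ} (hk₀ : 0 < k₀) (w v : ℕ → ℂ) {M : ℝ} (hM : ∀ n, ‖v n‖ ≤ M) (n : ℕ) :
    ‖goyB k₀ w v n‖ ≤ M * kk k₀ n * nbr w n := by
  have hM0 : 0 ≤ M := (norm_nonneg _).trans (hM 0)
  have hk := kk_pos hk₀ n
  unfold goyB
  split_ifs with h
  · rw [norm_zero]
    have := nbr_nonneg w n
    positivity
  · rw [norm_mul, norm_mul, Complex.norm_I, one_mul, Complex.norm_real, Real.norm_of_nonneg hk.le,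
      mul_comm M, mul_assoc (kk k₀ n) M]
    refine mul_le_mul_of_nonneg_left ?_ hk.le
    refine (norm_add_le _ _).trans ?_
    refine (add_le_add_left (norm_sub_le _ _) _).trans ?_
    have h1 := mul_le_mul_of_nonneg_left (hM (n - 1)) (norm_nonneg (w (n + 1)))
    have h2 := mul_le_mul_of_nonneg_left (hM (n + 2)) (norm_nonneg (w (n + 1)))
    have h3 := mul_le_mul_of_nonneg_left (hM (n + 1)) (norm_nonneg (w (n + 2)))
    have h4 := mul_le_mul_of_nonneg_left (hM (n - 2)) (norm_nonneg (w (n - 1)))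
    have h5 := norm_add_le ((starRingEnd ℂ) (w (n + 1)) * (starRingEnd ℂ) (v (n + 2)))
      ((starRingEnd ℂ) (w (n + 2)) * (starRingEnd ℂ) (v (n + 1)))
    have c1 : ‖(1 / 4 : ℂ)‖ = 1 / 4 := by norm_num
    have c2 : ‖(1 / 2 : ℂ)‖ = 1 / 2 := by norm_num
    have c3 : ‖(1 / 8 : ℂ)‖ = 1 / 8 := by norm_num
    simp only [norm_mul, RCLike.norm_conj, c1, c2, c3] at h5 ⊢
    unfold nbr
    nlinarith

/-- Boundedness of shifts on `ℓ²`; the hypothesis `w 0 = 0` makes the right shift isometric in spite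
of the truncated subtraction in `nbr`. -/
lemma nbr_sq {w : ℕ → ℂ} (hw0 : w 0 = 0) (hs : Summable fun n => ‖w n‖ ^ 2) :
    Summable (fun n => nbr w n ^ 2) ∧ ∑' n, nbr w n ^ 2 ≤ 4 * ∑' n, ‖w n‖ ^ 2 := by
  have s1 : Summable fun n => ‖w (n + 1)‖ ^ 2 := (summable_nat_add_iff 1).2 hs
  have s2 : Summable fun n => ‖w (n + 2)‖ ^ 2 := (summable_nat_add_iff 2).2 hs
  have s3 : Summable fun n => ‖w (n - 1)‖ ^ 2 :=
    (summable_nat_add_iff (f := fun n => ‖w (n - 1)‖ ^ 2) 1).1 (by simpa using hs)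
  have t1 : ∑' n, ‖w (n + 1)‖ ^ 2 = ∑' n, ‖w n‖ ^ 2 := by
    rw [hs.tsum_eq_zero_add]; simp [hw0]
  have t2 : ∑' n, ‖w (n + 2)‖ ^ 2 ≤ ∑' n, ‖w n‖ ^ 2 := by
    rw [← hs.sum_add_tsum_nat_add 2]
    exact le_add_of_nonneg_left (by positivity)
  have t3 : ∑' n, ‖w (n - 1)‖ ^ 2 = ∑' n, ‖w n‖ ^ 2 := by
    rw [s3.tsum_eq_zero_add]; simp [hw0]
  have hb : ∀ n, nbr w n ^ 2 ≤
      27 / 16 * ‖w (n + 1)‖ ^ 2 + 3 / 4 * ‖w (n + 2)‖ ^ 2 + 3 / 64 * ‖w (n - 1)‖ ^ 2 := by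
    intro n
    unfold nbr
    nlinarith [sq_nonneg (3 / 4 * ‖w (n + 1)‖ - 1 / 2 * ‖w (n + 2)‖),
      sq_nonneg (3 / 4 * ‖w (n + 1)‖ - 1 / 8 * ‖w (n - 1)‖),
      sq_nonneg (1 / 2 * ‖w (n + 2)‖ - 1 / 8 * ‖w (n - 1)‖)]
  have u1 := s1.mul_left (27 / 16)
  have u2 := s2.mul_left (3 / 4)
  have u3 := s3.mul_left (3 / 64)
  have hsum := (u1.add u2).add u3
  have hn : Summable (fun n => nbr w n ^ 2) :=
    Summable.of_nonneg_of_le (fun n => sq_nonneg _) hb hsum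
  refine ⟨hn, (hn.tsum_le_tsum hb hsum).trans ?_⟩
  rw [(u1.add u2).tsum_add u3, u1.tsum_add u2, tsum_mul_left, tsum_mul_left, tsum_mul_left, t1, t3]
  have : 0 ≤ ∑' n, ‖w n‖ ^ 2 := tsum_nonneg fun n => sq_nonneg _
  linarith

lemma norm_le_l4 {v : ℕ → ℂ} (hs : Summable fun n => ‖v n‖ ^ 2) (n : ℕ) :
    ‖v n‖ ≤ (∑' n, ‖v n‖ ^ 4) ^ ((1 : ℝ) / 4) := by
  have h4 : Summable fun n => ‖v n‖ ^ 4 := by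
    refine Summable.of_nonneg_of_le (fun n => by positivity) (fun n => ?_)
      (hs.mul_left (∑' n, ‖v n‖ ^ 2))
    have := hs.le_tsum n (fun j _ => sq_nonneg _)
    calc ‖v n‖ ^ 4 = ‖v n‖ ^ 2 * ‖v n‖ ^ 2 := by ring
      _ ≤ _ := mul_le_mul_of_nonneg_right this (sq_nonneg _)
  have h := h4.le_tsum n (fun j _ => by positivity)
  calc ‖v n‖ = (‖v n‖ ^ 4) ^ ((1 : ℝ) / 4) := by
        rw [← Real.rpow_natCast, ← Real.rpow_mul (norm_nonneg _)]; norm_num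
    _ ≤ _ := Real.rpow_le_rpow (by positivity) h (by norm_num)

/-- There exists `C > 0` such that for all `w, v ∈ V`,
`|(B(w,v), w)_H| ≤ C ‖v‖_{ℓ⁴} |w|^{1/2} ‖w‖^{3/2}`.  Here `|w|^{1/2}` is expressed as
`(Σ ‖w n‖²)^{1/4}` and `‖w‖^{3/2}` as `(Σ (k n)² ‖w n‖²)^{3/4}`. -/
theorem goyB_trilinear_interpolated_bound (k₀ : ℝ) (hk₀ : 0 < k₀) :
    ∃ C > 0, ∀ w v : ℕ → ℂ, w 0 = 0 → v 0 = 0 →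
      Summable (fun n => ‖w n‖ ^ 2) →
      Summable (fun n => (kk k₀ n) ^ 2 * ‖w n‖ ^ 2) →
      Summable (fun n => ‖v n‖ ^ 2) →
      Summable (fun n => (kk k₀ n) ^ 2 * ‖v n‖ ^ 2) →
      |(∑' n, goyB k₀ w v n * (starRingEnd ℂ) (w n)).re| ≤
        C * (∑' n, ‖v n‖ ^ 4) ^ ((1 : ℝ) / 4) * (∑' n, ‖w n‖ ^ 2) ^ ((1 : ℝ) / 4)
          * (∑' n, (kk k₀ n) ^ 2 * ‖w n‖ ^ 2) ^ ((3 : ℝ) / 4) := by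
  refine ⟨2 * (1 / k₀ ^ 2) ^ ((1 : ℝ) / 4), by positivity, ?_⟩
  intro w v hw0 _ hw hkw hv _
  set M := (∑' n, ‖v n‖ ^ 4) ^ ((1 : ℝ) / 4) with hMdef
  set S := ∑' n, ‖w n‖ ^ 2 with hS
  set E := ∑' n, (kk k₀ n) ^ 2 * ‖w n‖ ^ 2 with hE
  have hM : ∀ n, ‖v n‖ ≤ M := norm_le_l4 hv
  have hM0 : 0 ≤ M := (norm_nonneg _).trans (hM 0)
  have hS0 : 0 ≤ S := tsum_nonneg fun n => sq_nonneg _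
  have hE0 : 0 ≤ E := tsum_nonneg fun n => by positivity
  obtain ⟨hn, hnS⟩ := nbr_sq hw0 hw
  have hf0 : ∀ n, 0 ≤ kk k₀ n * ‖w n‖ := fun n => mul_nonneg (kk_pos hk₀ n).le (norm_nonneg _)
  have hf2 : Summable fun n => (kk k₀ n * ‖w n‖) ^ (2 : ℝ) := by simpa [mul_pow] using hkw
  have hn2 : Summable fun n => nbr w n ^ (2 : ℝ) := by simpa using hn
  have cs := Real.summable_mul_of_Lp_Lq_of_nonneg Real.HolderConjugate.two_two hf0
    (nbr_nonneg w) hf2 hn2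
  have csle := Real.inner_le_Lp_mul_Lq_tsum_of_nonneg Real.HolderConjugate.two_two hf0
    (nbr_nonneg w) hf2 hn2
  simp only [Real.rpow_two, mul_pow] at csle
  rw [← hE] at csle
  have hpt : ∀ n, ‖goyB k₀ w v n * (starRingEnd ℂ) (w n)‖ ≤
      M * (kk k₀ n * ‖w n‖ * nbr w n) := by
    intro n
    rw [norm_mul, RCLike.norm_conj]
    calc _ ≤ M * kk k₀ n * nbr w n * ‖w n‖ :=
          mul_le_mul_of_nonneg_right (norm_goyB_le hk₀ w v hM n) (norm_nonneg _)
      _ = _ := by ring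
  have hmain : |(∑' n, goyB k₀ w v n * (starRingEnd ℂ) (w n)).re| ≤
      M * (E ^ ((1 : ℝ) / 2) * (∑' n, nbr w n ^ 2) ^ ((1 : ℝ) / 2)) := by
    refine (Complex.abs_re_le_norm _).trans ?_
    refine (tsum_of_norm_bounded (cs.mul_left M).hasSum hpt).trans ?_
    rw [tsum_mul_left]
    exact mul_le_mul_of_nonneg_left csle hM0
  have hSE : S ≤ 1 / k₀ ^ 2 * E := by
    rw [hE, ← tsum_mul_left]
    refine hw.tsum_le_tsum (fun n => ?_) (hkw.mul_left _)
    have h1 : (1 : ℝ) ≤ (2 ^ n) ^ 2 := one_le_pow₀ (one_le_pow₀ (by norm_num))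
    have h2 : 1 / k₀ ^ 2 * (kk k₀ n ^ 2 * ‖w n‖ ^ 2) = (2 ^ n) ^ 2 * ‖w n‖ ^ 2 := by
      unfold kk; field_simp
    rw [h2]
    exact le_mul_of_one_le_left (sq_nonneg _) h1
  have hN : (∑' n, nbr w n ^ 2) ^ ((1 : ℝ) / 2) ≤ 2 * S ^ ((1 : ℝ) / 2) := by
    refine (Real.rpow_le_rpow (tsum_nonneg fun n => sq_nonneg _) hnS (by norm_num)).trans ?_
    rw [Real.mul_rpow (by norm_num) hS0]
    have : (4 : ℝ) ^ ((1 : ℝ) / 2) = 2 := by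
      rw [← Real.sqrt_eq_rpow, show (4 : ℝ) = 2 ^ 2 by norm_num]
      exact Real.sqrt_sq (by norm_num)
    rw [this]
  have hq : S ^ ((1 : ℝ) / 4) ≤ (1 / k₀ ^ 2) ^ ((1 : ℝ) / 4) * E ^ ((1 : ℝ) / 4) := by
    rw [← Real.mul_rpow (by positivity) hE0]
    exact Real.rpow_le_rpow hS0 hSE (by norm_num)
  have hS2 : S ^ ((1 : ℝ) / 2) = S ^ ((1 : ℝ) / 4) * S ^ ((1 : ℝ) / 4) := by
    rw [← Real.rpow_add_of_nonneg hS0 (by norm_num) (by norm_num)]; norm_num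
  have hE3 : E ^ ((3 : ℝ) / 4) = E ^ ((1 : ℝ) / 2) * E ^ ((1 : ℝ) / 4) := by
    rw [← Real.rpow_add_of_nonneg hE0 (by norm_num) (by norm_num)]; norm_num
  calc _ ≤ M * (E ^ ((1 : ℝ) / 2) * (∑' n, nbr w n ^ 2) ^ ((1 : ℝ) / 2)) := hmain
    _ ≤ M * (E ^ ((1 : ℝ) / 2) * (2 * (S ^ ((1 : ℝ) / 4) * S ^ ((1 : ℝ) / 4)))) := by
        rw [← hS2]; gcongr
    _ ≤ M * (E ^ ((1 : ℝ) / 2) * (2 * (S ^ ((1 : ℝ) / 4) *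
          ((1 / k₀ ^ 2) ^ ((1 : ℝ) / 4) * E ^ ((1 : ℝ) / 4))))) := by
        gcongr
    _ = _ := by rw [hE3]; ring
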